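/- Drop N balls uniformly and independently at random into B bins where B ≥ N + √N or B ≤ N - √N, with N ≥ 1, B ≥ 2. Then for any 0 < ε < 1, the number of singleton bins is at least (1-ε)·N/e^{N/(B-1)} with probability at least 1 - exp(-ε²·N/(2·e^{N/(B-1)})). -/

import Mathlib

open scoped Classical

lemma sg_num1 (l b : ℝ) (hl : 0 ≤ l) (hb : Real.exp (-l) ≤ b) :
    1 - l ≤ b ∧ 0.367 * (2 - l) ≤ b ∧ 0.135 * (3 - l) ≤ b ∧ 0 ≤ b := by
  have h0 := Real.add_one_le_exp (-l)
  have h1 := Real.add_one_le_exp (1-l)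
  have h2 := Real.add_one_le_exp (2-l)
  have e1 := Real.exp_one_lt_d9
  have e0 := Real.exp_pos 1
  have p := Real.exp_pos (-l)
  have q1 : Real.exp (1-l) = Real.exp 1 * Real.exp (-l) := by rw [← Real.exp_add]; ring_nf
  have q2 : Real.exp (2-l) = Real.exp 1 * (Real.exp 1 * Real.exp (-l)) := by
    rw [← Real.exp_add, ← Real.exp_add]; ring_nf
  rw [q1] at h1
  rw [q2] at h2
  have h3 : Real.exp 1 * Real.exp (-l) ≤ 2.7182818286 * Real.exp (-l) := by gcongr
  have h4 : Real.exp 1 * (Real.exp 1 * Real.exp (-l)) ≤ 2.7182818286 * (2.7182818286 * Real.exp (-l)) := by gcongr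
  refine ⟨by linarith, ?_, ?_, by linarith⟩
  · linarith
  · linarith

noncomputable def sgP (l u y b : ℝ) : ℝ :=
  b * (1 - y * (l - u) / 2 + y * (1 - u + l + l * (l - u) / 2))
    + (1 - y) / 2 * (y * (1 - u + l + l * (l - u) / 2)) + u * (y * (1 - u + l + l * (l - u) / 2))
    - (1 - y * (l - u) / 2)

lemma sg_num2 (l b : ℝ) (hl : 0 ≤ l) (h0 : 1 - l ≤ b) (h1 : 0.367 * (2 - l) ≤ b)
    (h2 : 0.135 * (3 - l) ≤ b) (h3 : 0 ≤ b) :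
    0 ≤ sgP l 0 0.36 b ∧ 0 ≤ sgP l (1/2) 0.36 b ∧ 0 ≤ sgP l 0 1 b ∧ 0 ≤ sgP l (1/2) 1 b := by
  unfold sgP
  refine ⟨?_, ?_, ?_, ?_⟩
  · have hc : 0 ≤ (1 - 0.36 * (l - 0) / 2 + 0.36 * (1 - 0 + l + l * (l - 0) / 2)) := by nlinarith
    rcases le_total l 0.45 with h | h
    · nlinarith [mul_le_mul_of_nonneg_right h0 hc, mul_nonneg hl hl, mul_nonneg hl (mul_nonneg hl (sub_nonneg.2 h)), mul_nonneg hl (sub_nonneg.2 h)]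
    rcases le_total l 1.4 with h' | h'
    · nlinarith [mul_le_mul_of_nonneg_right h1 hc, mul_nonneg (sub_nonneg.2 h') (sub_nonneg.2 h), mul_nonneg hl (mul_nonneg (sub_nonneg.2 h') (sub_nonneg.2 h))]
    rcases le_total l 3 with h'' | h''
    · nlinarith [mul_le_mul_of_nonneg_right h2 hc, mul_nonneg (sub_nonneg.2 h'') (sub_nonneg.2 h'), mul_nonneg hl (mul_nonneg (sub_nonneg.2 h'') (sub_nonneg.2 h'))]
    · nlinarith [mul_le_mul_of_nonneg_right h3 hc]
  · have hc : 0 ≤ (1 - 0.36 * (l - 1/2) / 2 + 0.36 * (1 - 1/2 + l + l * (l - 1/2) / 2)) := by nlinarith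
    rcases le_total l 0.43 with h | h
    · nlinarith [mul_le_mul_of_nonneg_right h0 hc, mul_nonneg hl hl, mul_nonneg hl (mul_nonneg hl (sub_nonneg.2 h)), mul_nonneg hl (sub_nonneg.2 h)]
    rcases le_total l 1.4 with h' | h'
    · nlinarith [mul_le_mul_of_nonneg_right h1 hc, mul_nonneg (sub_nonneg.2 h') (sub_nonneg.2 h), mul_nonneg hl (mul_nonneg (sub_nonneg.2 h') (sub_nonneg.2 h)), sq_nonneg (l-0.7), mul_nonneg hl (sq_nonneg (l-0.7))]
    rcases le_total l 3 with h'' | h''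
    · nlinarith [mul_le_mul_of_nonneg_right h2 hc, mul_nonneg (sub_nonneg.2 h'') (sub_nonneg.2 h'), mul_nonneg hl (mul_nonneg (sub_nonneg.2 h'') (sub_nonneg.2 h'))]
    · nlinarith [mul_le_mul_of_nonneg_right h3 hc]
  · have hc : 0 ≤ (1 - 1 * (l - 0) / 2 + 1 * (1 - 0 + l + l * (l - 0) / 2)) := by nlinarith
    rcases le_total l 0.43 with h | h
    · nlinarith [mul_le_mul_of_nonneg_right h0 hc, mul_nonneg hl hl, mul_nonneg hl (mul_nonneg hl (sub_nonneg.2 h)), mul_nonneg hl (sub_nonneg.2 h)]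
    rcases le_total l 1.4 with h' | h'
    · nlinarith [mul_le_mul_of_nonneg_right h1 hc, mul_nonneg (sub_nonneg.2 h') (sub_nonneg.2 h), mul_nonneg hl (mul_nonneg (sub_nonneg.2 h') (sub_nonneg.2 h))]
    rcases le_total l 3 with h'' | h''
    · nlinarith [mul_le_mul_of_nonneg_right h2 hc, mul_nonneg (sub_nonneg.2 h'') (sub_nonneg.2 h'), mul_nonneg hl (mul_nonneg (sub_nonneg.2 h'') (sub_nonneg.2 h'))]
    · nlinarith [mul_le_mul_of_nonneg_right h3 hc]
  · have hc : 0 ≤ (1 - 1 * (l - 1/2) / 2 + 1 * (1 - 1/2 + l + l * (l - 1/2) / 2)) := by nlinarith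
    rcases le_total l 0.43 with h | h
    · nlinarith [mul_le_mul_of_nonneg_right h0 hc, mul_nonneg hl hl, mul_nonneg hl (mul_nonneg hl (sub_nonneg.2 h)), mul_nonneg hl (sub_nonneg.2 h)]
    rcases le_total l 1.4 with h' | h'
    · nlinarith [mul_le_mul_of_nonneg_right h1 hc, mul_nonneg (sub_nonneg.2 h') (sub_nonneg.2 h), mul_nonneg hl (mul_nonneg (sub_nonneg.2 h') (sub_nonneg.2 h))]
    rcases le_total l 3 with h'' | h''
    · nlinarith [mul_le_mul_of_nonneg_right h2 hc, mul_nonneg (sub_nonneg.2 h'') (sub_nonneg.2 h'), mul_nonneg hl (mul_nonneg (sub_nonneg.2 h'') (sub_nonneg.2 h'))]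
    · nlinarith [mul_le_mul_of_nonneg_right h3 hc]

lemma sg_num3 (l u y b : ℝ) (hl : 0 ≤ l) (hu0 : 0 ≤ u) (hu : u ≤ 1/2) (hy0 : 0.36 ≤ y) (hy : y ≤ 1)
    (hb : Real.exp (-l) ≤ b) : 0 ≤ sgP l u y b := by
  obtain ⟨h0, h1, h2, h3⟩ := sg_num1 l b hl hb
  obtain ⟨k1, k2, k3, k4⟩ := sg_num2 l b hl h0 h1 h2 h3
  have hconv : ∀ y, 0 ≤ y → 0 ≤ sgP l 0 y b → 0 ≤ sgP l (1/2) y b → 0 ≤ sgP l u y b := by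
    intro y hy p q
    have e : sgP l u y b = (1 - 2*u) * sgP l 0 y b + 2*u * sgP l (1/2) y b
        + (1 + l/2) * y * (u * (1/2 - u)) := by
      unfold sgP; ring
    rw [e]
    have := mul_nonneg (by linarith : 0 ≤ 1 - 2*u) p
    have := mul_nonneg (by linarith : 0 ≤ 2*u) q
    have : 0 ≤ 1/2 - u := by linarith
    positivity
  have m1 := hconv 0.36 (by norm_num) k1 k2
  have m2 := hconv 1 (by norm_num) k3 k4
  have e : sgP l u y b = ((1 - y) * sgP l u 0.36 b + (y - 0.36) * sgP l u 1 b) / 0.64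
        + (1 - u + l + l * (l - u) / 2) / 2 * ((1-y) * (y - 0.36)) := by
      unfold sgP; ring
  rw [e]
  have a1 : 0 ≤ 1 - y := by linarith
  have a2 : 0 ≤ y - 0.36 := by linarith
  have a3 : 0 ≤ (1 - u + l + l * (l - u) / 2) := by nlinarith
  positivity

noncomputable def sgw (y : ℝ) (k : ℕ) : ℝ := if k = 1 then y else 1

noncomputable def sgG (y : ℝ) : ℕ → ℕ → ℝ
  | 0, N => if N = 0 then 1 else 0
  | B + 1, N => ∑ k ∈ Finset.range (N + 1), (N.choose k : ℝ) * sgw y k * sgG y B (N - k)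

noncomputable def sgF (y : ℝ) : PowerSeries ℝ := PowerSeries.mk fun n => sgw y n / (n.factorial : ℝ)

lemma sg_coeff_mul (a b : ℕ → ℝ) (N : ℕ) :
    PowerSeries.coeff N (PowerSeries.mk (fun n => a n / (n.factorial : ℝ)) *
      PowerSeries.mk (fun n => b n / (n.factorial : ℝ))) =
    (∑ k ∈ Finset.range (N + 1), (N.choose k : ℝ) * a k * b (N - k)) / (N.factorial : ℝ) := by
  rw [PowerSeries.coeff_mul, Finset.Nat.sum_antidiagonal_eq_sum_range_succ_mk, Finset.sum_div]
  refine Finset.sum_congr rfl fun k hk => ?_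
  have hk' : k ≤ N := by simpa [Nat.lt_succ_iff] using hk
  simp only [PowerSeries.coeff_mk]
  rw [Nat.cast_choose ℝ hk']
  have := Nat.factorial_pos N
  field_simp

lemma sgF_pow (y : ℝ) (B : ℕ) :
    sgF y ^ B = PowerSeries.mk fun n => sgG y B n / (n.factorial : ℝ) := by
  induction B with
  | zero =>
    ext n
    simp only [pow_zero, PowerSeries.coeff_one, PowerSeries.coeff_mk, sgG]
    split_ifs with h <;> simp [h]
  | succ B ih =>
    rw [pow_succ', ih]
    ext n
    rw [sgF, sg_coeff_mul, PowerSeries.coeff_mk]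
    rfl

/-- drop the first ball -/
lemma sgG_succ (y : ℝ) (B N : ℕ) :
    sgG y (B + 1) (N + 1) =
      (B + 1) * ∑ k ∈ Finset.range (N + 1), (N.choose k : ℝ) * sgw y (k + 1) * sgG y B (N - k) := by
  have hd : PowerSeries.derivative ℝ (sgF y) = PowerSeries.mk fun n => sgw y (n+1) / (n.factorial : ℝ) := by
    ext n
    rw [PowerSeries.coeff_derivative, sgF, PowerSeries.coeff_mk, PowerSeries.coeff_mk, Nat.factorial_succ]
    push_cast
    have := Nat.factorial_pos n
    field_simp
  have h := congrArg (PowerSeries.coeff N) (PowerSeries.derivative_pow (R := ℝ) (sgF y) (B+1))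
  rw [PowerSeries.coeff_derivative, sgF_pow, PowerSeries.coeff_mk, Nat.add_sub_cancel, sgF_pow, hd,
    mul_assoc, mul_comm (PowerSeries.mk _) (PowerSeries.mk _)] at h
  have e : (((B+1 : ℕ) : PowerSeries ℝ)) = PowerSeries.C ((B+1 : ℕ) : ℝ) := by simp
  rw [e, PowerSeries.coeff_C_mul, sg_coeff_mul (fun n => sgw y (n+1)), Nat.factorial_succ] at h
  push_cast at h
  have := Nat.factorial_pos N
  field_simp at h
  linarith

lemma sgw_pos (y : ℝ) (hy : 0 < y) (k : ℕ) : 0 < sgw y k := by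
  unfold sgw; split_ifs <;> linarith

lemma sgG_nonneg (y : ℝ) (hy : 0 < y) (B N : ℕ) : 0 ≤ sgG y B N := by
  induction B generalizing N with
  | zero => unfold sgG; split_ifs <;> norm_num
  | succ B ih =>
    unfold sgG
    exact Finset.sum_nonneg fun k _ => mul_nonneg (mul_nonneg (by positivity) (sgw_pos y hy k).le) (ih _)

lemma sgG_lower (y : ℝ) (hy : 0 < y) (hy1 : y ≤ 1) (B N : ℕ) :
    y * B * sgG y B N ≤ sgG y B (N + 1) := by
  cases B with
  | zero => simp [sgG]
  | succ B =>
    rw [sgG_succ, mul_comm y, mul_assoc]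
    push_cast
    gcongr
    rw [sgG, Finset.mul_sum]
    refine Finset.sum_le_sum fun k _ => ?_
    have : y * sgw y k ≤ sgw y (k+1) := by
      unfold sgw; split_ifs <;> first | omega | nlinarith
    have h2 := mul_le_mul_of_nonneg_right this (mul_nonneg (Nat.cast_nonneg (N.choose k)) (sgG_nonneg y hy B (N-k)))
    linarith

lemma sgG_upper (y : ℝ) (hy : 0 < y) (hy1 : y ≤ 1) (B N : ℕ) :
    y * sgG y B (N + 1) ≤ B * sgG y B N := by
  cases B with
  | zero => simp [sgG]
  | succ B =>
    rw [sgG_succ, ← mul_assoc, mul_comm y, mul_assoc]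
    push_cast
    gcongr
    rw [sgG, Finset.mul_sum]
    refine Finset.sum_le_sum fun k _ => ?_
    have : y * sgw y (k+1) ≤ sgw y k := by
      unfold sgw; split_ifs <;> first | omega | nlinarith
    have h2 := mul_le_mul_of_nonneg_right this (mul_nonneg (Nat.cast_nonneg (N.choose k)) (sgG_nonneg y hy B (N-k)))
    linarith

lemma sgG_diff (y : ℝ) (B N : ℕ) :
    (B + 1) * sgG y (B + 1) N - sgG y (B + 1) (N + 1) =
      (B + 1) * (1 - y) * (sgG y B N - N * sgG y B (N - 1)) := by
  rw [sgG_succ, sgG, ← mul_sub, ← Finset.sum_sub_distrib, mul_assoc]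
  congr 1
  cases N with
  | zero => simp [sgw]; ring
  | succ N =>
    rw [Finset.sum_range_succ', Finset.sum_range_succ', Finset.sum_eq_zero]
    · simp [sgw]; ring
    · intro k _
      simp [sgw]

lemma sgG_deriv (B N : ℕ) (y : ℝ) :
    HasDerivAt (fun y => sgG y B N) (N * B * sgG y (B - 1) (N - 1)) y := by
  induction B generalizing N with
  | zero => simpa [sgG] using hasDerivAt_const y _
  | succ B ih =>
    have hw : ∀ k, HasDerivAt (fun y => sgw y k) (if k = 1 then 1 else 0) y := by
      intro k
      unfold sgw
      split_ifs
      · exact hasDerivAt_id y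
      · exact hasDerivAt_const y _
    have h : HasDerivAt (fun y => sgG y (B+1) N) (∑ k ∈ Finset.range (N + 1),
        ((N.choose k : ℝ) * (if k = 1 then 1 else 0) * sgG y B (N - k)
          + (N.choose k : ℝ) * sgw y k * ((N - k : ℕ) * B * sgG y (B-1) (N - k - 1)))) y := by
      simp only [sgG]
      refine HasDerivAt.fun_sum fun k _ => ?_
      exact ((hw k).const_mul _).mul (ih (N-k))
    convert h using 1
    rw [Finset.sum_add_distrib]
    cases N with
    | zero => simp
    | succ N =>
      have e1 : ∑ k ∈ Finset.range (N + 1 + 1),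
        (((N+1).choose k : ℝ) * (if k = 1 then 1 else 0) * sgG y B (N + 1 - k)) = (N+1) * sgG y B N := by
        rw [Finset.sum_eq_single 1]
        · simp
        · intro k _ hk; simp [hk]
        · intro h; simp at h
      have e2 : ∑ k ∈ Finset.range (N + 1 + 1),
        (((N+1).choose k : ℝ) * sgw y k * ((N + 1 - k : ℕ) * B * sgG y (B-1) (N + 1 - k - 1))) =
          (N+1) * B * sgG y B N := by
        cases B with
        | zero => simp
        | succ B =>
          rw [Finset.sum_range_succ]
          simp only [Nat.sub_self, Nat.cast_zero, zero_mul, mul_zero, add_zero]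
          rw [sgG, Finset.mul_sum]
          refine Finset.sum_congr rfl fun k hk => ?_
          have hk' : k ≤ N := by simpa [Nat.lt_succ_iff] using hk
          have hc : ((N+1).choose k : ℝ) * (N + 1 - k : ℕ) = (N+1) * (N.choose k) := by
            have := Nat.choose_mul_succ_eq N k
            have h2 : ((N.choose k * (N+1) : ℕ) : ℝ) = ((N+1).choose k * (N+1-k) : ℕ) := by rw [this]
            push_cast at h2 ⊢
            linarith
          have hs : N + 1 - k - 1 = N - k := by omega
          rw [hs, Nat.add_sub_cancel]
          linear_combination (sgw y k * ((B+1:ℕ):ℝ) * sgG y B (N-k)) * hc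
      rw [e1, e2]
      simp
      ring

/-- combinatorial interpretation -/
lemma sgG_comb (y : ℝ) (B : ℕ) : ∀ (α : Type) [Fintype α],
    ∑ f : α → Fin B, ∏ j : Fin B, sgw y (Finset.univ.filter (fun i => f i = j)).card
      = sgG y B (Fintype.card α) := by
  induction B with
  | zero =>
    intro α _
    unfold sgG
    split_ifs with h
    · have := Fintype.card_eq_zero_iff.1 h
      simp
    · have : Nonempty α := Fintype.card_pos_iff.1 (Nat.pos_of_ne_zero h)
      simp
  | succ B ih =>
    intro α _
    have key : ∀ s : Finset α,
        ∑ f : α → Fin (B+1) with Finset.univ.filter (fun i => f i = 0) = s,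
          ∏ j : Fin (B+1), sgw y (Finset.univ.filter (fun i => f i = j)).card
        = sgw y s.card * sgG y B (Fintype.card α - s.card) := by
      intro s
      have hcard : Fintype.card {a // a ∉ s} = Fintype.card α - s.card := by
        simp [Fintype.card_subtype_compl]
      rw [← hcard, ← ih, Finset.mul_sum]
      symm
      refine Finset.sum_bij'
        (fun (g : {a // a ∉ s} → Fin B) _ => fun a => if h : a ∈ s then (0 : Fin (B+1)) else (g ⟨a, h⟩).succ)
        (fun (f : α → Fin (B+1)) hf => fun a => (f a.1).pred (by
          simp only [Finset.mem_filter, Finset.mem_univ, true_and] at hf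
          intro h0
          exact a.2 ((Finset.ext_iff.1 hf a.1).1 (by simp [h0]))))
        ?_ ?_ ?_ ?_ ?_
      · intro g _
        simp only [Finset.mem_filter, Finset.mem_univ, true_and]
        ext a
        simp only [Finset.mem_filter, Finset.mem_univ, true_and]
        by_cases h : a ∈ s <;> simp [h]
      · intro f _; simp
      · intro g _
        funext a
        simp [a.2]
      · intro f hf
        simp only [Finset.mem_filter, Finset.mem_univ, true_and] at hf
        funext a
        by_cases h : a ∈ s
        · simp only [h, dif_pos]
          rw [← hf] at h
          have h2 : f a = 0 := by simpa using h
          exact h2.symm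
        · simp [h]
      · intro g _
        rw [Fin.prod_univ_succ]
        congr 2
        · congr 1
          ext a
          simp only [Finset.mem_filter, Finset.mem_univ, true_and]
          by_cases h : a ∈ s <;> simp [h]
        · funext j
          congr 1
          refine Finset.card_bij (fun a _ => a.1) ?_ ?_ ?_
          · intro a ha
            simp only [Finset.mem_filter, Finset.mem_univ, true_and] at ha ⊢
            simp [a.2, ha]
          · intro a _ b _ h
            exact Subtype.ext h
          · intro a ha
            simp only [Finset.mem_filter, Finset.mem_univ, true_and] at ha
            by_cases h : a ∈ s
            · simp [h] at ha
              exact absurd ha (Fin.succ_ne_zero j).symm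
            · refine ⟨⟨a, h⟩, ?_, rfl⟩
              simpa [h] using ha
    rw [← Finset.sum_fiberwise (s := Finset.univ) (g := fun f : α → Fin (B+1) => Finset.univ.filter (fun i => f i = 0))]
    rw [Finset.sum_congr rfl (fun s _ => key s)]
    have := Finset.sum_powerset_apply_card (fun k => sgw y k * sgG y B (Fintype.card α - k)) (x := (Finset.univ : Finset α))
    rw [Finset.powerset_univ, Finset.card_univ] at this
    rw [this, sgG]
    refine Finset.sum_congr rfl fun k _ => ?_
    rw [nsmul_eq_mul, mul_assoc]

lemma sg_abel (S f : ℕ → ℝ) (n : ℕ) :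
    ∑ k ∈ Finset.range (n+1), (S k - S (k+1)) * f k =
      S 0 * f 0 + ∑ i ∈ Finset.range n, S (i+1) * (f (i+1) - f i) - S (n+1) * f n := by
  induction n with
  | zero => simp; ring
  | succ n ih => rw [Finset.sum_range_succ, ih, Finset.sum_range_succ]; ring

lemma sg_tail (x : ℝ) (hx : 0 ≤ x) (S a c : ℕ → ℝ) (ha : ∀ i, 0 ≤ a i) (n : ℕ)
    (hS : ∀ i, i < n + 1 → S (i+2) ≤ c i * S (i+1)) :
    ∑ i ∈ Finset.range (n+2), S (i+1) * (x * (a i - c i * a (i+1))) ≤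
      x * (S 1 * a 0 - (c 0 * S 1 - S 2) * a 1 - c (n+1) * S (n+2) * a (n+2)) := by
  induction n with
  | zero => simp [Finset.sum_range_succ]; ring_nf; rfl
  | succ n ih =>
    rw [Finset.sum_range_succ]
    have h1 := ih (fun i hi => hS i (by omega))
    have h2 := mul_le_mul_of_nonneg_right (hS (n+1) (by omega)) (mul_nonneg hx (ha (n+2)))
    have e : n + 1 + 2 = n + 2 + 1 := rfl
    simp only [e, show n + 1 + 1 = n + 2 from rfl] at *
    linarith

lemma sg_key (y : ℝ) (hy0 : 0.36 ≤ y) (hy1 : y ≤ 1) (n M : ℕ) :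
    sgG y (n+2) (M+1) / ((n:ℝ)+2)^(M+1) ≤
      (1 + (1-y)^2/2 + (1-y) * (1/((n:ℝ)+1))) * (sgG y (n+1) M / ((n:ℝ)+1)^M) := by
  have hy : 0 < y := by linarith
  set u : ℝ := 1/((n:ℝ)+1) with hu
  have hn : (0:ℝ) < (n:ℝ)+1 := by positivity
  have hu0 : 0 < u := by positivity
  have hu1 : u * ((n:ℝ)+1) = 1 := by rw [hu]; field_simp
  set H : ℕ → ℝ := fun m => sgG y (n+1) m * u^m with hH
  set A : ℕ → ℝ := fun m => sgG y n m * u^m with hA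
  set b0 : ℝ := (((n:ℝ)+1)/((n:ℝ)+2))^M with hb0
  set b : ℕ → ℝ := fun k => (M.choose k : ℝ) * u^k * b0 with hb
  have hb0p : 0 < b0 := by positivity
  have hbn : ∀ k, 0 ≤ b k := fun k => by positivity
  set S : ℕ → ℝ := fun l => ∑ k ∈ Finset.Ico l (M+1), b k with hS
  set x : ℝ := 1 - y with hx
  have hx0 : 0 ≤ x := by linarith
  have hAn : ∀ m, 0 ≤ A m := fun m => mul_nonneg (sgG_nonneg y hy _ _) (by positivity)
  have hHn : ∀ m, 0 ≤ H m := fun m => mul_nonneg (sgG_nonneg y hy _ _) (by positivity)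
  have hS0 : S 0 = 1 := by
    simp only [hS, hb]
    rw [← Finset.sum_mul, show Finset.Ico 0 (M+1) = Finset.range (M+1) by rw [Finset.range_eq_Ico]]
    have := add_pow u 1 M
    simp only [one_pow, mul_one] at this
    rw [Finset.sum_congr rfl (fun k _ => mul_comm _ _), ← this, hb0, ← mul_pow]
    have : (u + 1) * (((n:ℝ)+1)/((n:ℝ)+2)) = 1 := by rw [hu]; field_simp; ring
    rw [this, one_pow]
  have hSend : S (M+1) = 0 := by simp [hS]
  have hSstep : ∀ k, k ≤ M → b k = S k - S (k+1) := by
    intro k hk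
    simp only [hS]
    rw [Finset.sum_eq_sum_Ico_succ_bot (by omega : k < M+1)]
    ring
  have hSn : ∀ l, 0 ≤ S l := fun l => Finset.sum_nonneg fun k _ => hbn k
  have hratio : ∀ l, l ≤ M → S (l+1) * (l+1) ≤ ((M - l : ℕ):ℝ) * u * S l := by
    intro l hl
    have e1 : S (l+1) = ∑ k ∈ Finset.Ico l M, b (k+1) := by
      simp only [hS]
      rw [Finset.sum_Ico_add' b l M 1]
    have e2 : ∑ k ∈ Finset.Ico l M, b k ≤ S l :=
      Finset.sum_le_sum_of_subset_of_nonneg (Finset.Ico_subset_Ico_right (by omega)) (fun k _ _ => hbn k)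
    calc S (l+1) * (l+1) ≤ ((M - l : ℕ):ℝ) * u * ∑ k ∈ Finset.Ico l M, b k := by
          rw [e1, Finset.sum_mul, Finset.mul_sum]
          refine Finset.sum_le_sum fun k hk => ?_
          rw [Finset.mem_Ico] at hk
          have h1 : b (k+1) * (k+1) = ((M - k : ℕ):ℝ) * u * b k := by
            simp only [hb]
            have := Nat.choose_succ_right_eq M k
            have h2 : ((M.choose (k+1) * (k+1) : ℕ) : ℝ) = (M.choose k * (M-k) : ℕ) := by rw [this]
            push_cast at h2
            push_cast
            linear_combination (u^(k+1) * b0) * h2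
          have h3 : b (k+1) * (l+1) ≤ b (k+1) * (k+1) := by
            have : (l:ℝ) ≤ k := by exact_mod_cast hk.1
            gcongr
          have h4 : ((M - k : ℕ):ℝ) * u * b k ≤ ((M - l : ℕ):ℝ) * u * b k := by
            have : ((M - k : ℕ):ℝ) ≤ ((M - l : ℕ):ℝ) := by exact_mod_cast (by omega : M - k ≤ M - l)
            gcongr
          linarith
      _ ≤ _ := by gcongr
  have hdiff : ∀ m, H m - H (m+1) = x * (A m - (m * u) * A (m-1)) := by
    intro m
    have h := sgG_diff y n m
    simp only [hH, hA]
    cases m with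
    | zero => simp at h ⊢; linear_combination u * h + (x * sgG y n 0 - sgG y (n+1) 0) * hu1
    | succ m =>
      simp only [Nat.add_sub_cancel] at h ⊢
      linear_combination u^(m+2) * h + (u^(m+1) * x * (sgG y n (m+1) - (m+1:ℕ) * sgG y n m) - u^(m+1) * sgG y (n+1) (m+1)) * hu1
  have hHM : sgG y (n+1) M / ((n:ℝ)+1)^M = H M := by
    simp only [hH, hu]; rw [one_div, inv_pow]; rfl
  have hg : sgG y (n+2) (M+1) / ((n:ℝ)+2)^(M+1) = ∑ k ∈ Finset.range (M+1), b k * H (M-k) - x * b0 * H M := by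
    rw [show n + 2 = (n+1)+1 from rfl, sgG_succ]
    have : ∀ k ∈ Finset.range (M+1), (M.choose k : ℝ) * sgw y (k+1) * sgG y (n+1) (M-k) =
        ((n:ℝ)+2)^M * (sgw y (k+1) * (b k * H (M-k))) := by
      intro k hk
      have hk' : k ≤ M := by simpa [Nat.lt_succ_iff] using hk
      simp only [hb, hH, hb0]
      have : ((n:ℝ)+2)^M * (((n:ℝ)+1)/((n:ℝ)+2))^M * (u^k * u^(M-k)) = 1 := by
        rw [← pow_add, Nat.add_sub_cancel' hk', ← mul_pow, ← mul_pow]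
        have : ((n:ℝ)+2) * (((n:ℝ)+1)/((n:ℝ)+2)) * u = 1 := by rw [hu]; field_simp
        rw [this, one_pow]
      linear_combination -((M.choose k : ℝ) * sgw y (k+1) * sgG y (n+1) (M-k)) * this
    rw [Finset.sum_congr rfl this, ← Finset.mul_sum]
    have e : ((((n+1:ℕ):ℝ)+1) * (((n:ℝ)+2)^M * ∑ k ∈ Finset.range (M+1), sgw y (k+1) * (b k * H (M-k)))) / ((n:ℝ)+2)^(M+1)
      = ∑ k ∈ Finset.range (M+1), sgw y (k+1) * (b k * H (M-k)) := by
      push_cast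
      field_simp
      ring
    rw [e, Finset.sum_range_succ', Finset.sum_range_succ' (fun k => b k * H (M-k))]
    have e2 : ∀ k, sgw y (k+1+1) = 1 := by intro k; simp [sgw]
    simp only [e2, one_mul]
    simp [sgw, hb]
    ring
  have hmain : ∑ k ∈ Finset.range (M+1), b k * H (M-k) = H M + ∑ i ∈ Finset.range M, S (i+1) * (x * (A (M-1-i) - (((M-1-i:ℕ):ℝ)*u) * A (M-1-(i+1)))) := by
    have h1 : ∑ k ∈ Finset.range (M+1), b k * H (M-k) = ∑ k ∈ Finset.range (M+1), (S k - S (k+1)) * H (M-k) := by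
      refine Finset.sum_congr rfl fun k hk => ?_
      rw [hSstep k (by simpa [Nat.lt_succ_iff] using hk)]
    rw [h1, sg_abel S (fun k => H (M-k)) M, hS0, hSend]
    simp only [Nat.sub_zero, one_mul, zero_mul, sub_zero]
    congr 1
    refine Finset.sum_congr rfl fun i hi => ?_
    have hi' : i < M := by simpa using hi
    have h2 := hdiff (M-1-i)
    rw [show M - 1 - i + 1 = M - i by omega, show M-1-i-1 = M-1-(i+1) by omega] at h2
    rw [show M - (i+1) = M-1-i by omega, h2]
  rw [hg, hHM, hmain]
  -- now finish
  suffices hfin : ∑ i ∈ Finset.range M, S (i+1) * (x * (A (M-1-i) - (((M-1-i:ℕ):ℝ)*u) * A (M-1-(i+1)))) ≤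
      x * ((b0 + x/2 + u) * H M) by linarith
  have hS1 : S 1 = 1 - b0 := by
    have := hSstep 0 (by omega)
    rw [hS0] at this
    simp [hb] at this
    linarith
  have hb0e : Real.exp (-((M:ℝ)*u)) ≤ b0 := by
    rw [hb0, show -((M:ℝ)*u) = (M:ℝ) * (-u) by ring, Real.exp_nat_mul]
    gcongr
    rw [Real.exp_neg]
    have := Real.add_one_le_exp u
    have h2 : ((n:ℝ)+1)/((n:ℝ)+2) = (u+1)⁻¹ := by rw [hu]; field_simp; ring
    rw [h2]
    gcongr
  have hH3 : H M = ∑ k ∈ Finset.range (M+1), (M.choose k : ℝ) * u^k * sgw y k * A (M-k) := by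
    simp only [hH, hA, sgG]
    rw [Finset.sum_mul]
    refine Finset.sum_congr rfl fun k hk => ?_
    have hk' : k ≤ M := by simpa [Nat.lt_succ_iff] using hk
    have : u^M = u^k * u^(M-k) := by rw [← pow_add, Nat.add_sub_cancel' hk']
    rw [this]; ring
  rcases M with _ | _ | m
  · simp
    have := hHn 0
    positivity
  · -- M = 1
    have hG0 : ∀ B, sgG y B 0 = 1 := by
      intro B
      induction B with
      | zero => simp [sgG]
      | succ B ih => simp [sgG, sgw, ih]
    have hA0 : A 0 = 1 := by simp [hA, hG0]
    have hH1 : y ≤ H 1 := by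
      have h := sgG_lower y hy hy1 (n+1) 0
      rw [hG0] at h
      push_cast at h
      have h2 := mul_le_mul_of_nonneg_right h hu0.le
      simp only [hH, zero_add, pow_one] at h2 ⊢
      have e : y * ((n:ℝ)+1) * 1 * u = y := by linear_combination y * hu1
      linarith
    have hbu : b0 * (1+u) = 1 := by
      rw [hb0, hu, zero_add, pow_one]; field_simp; ring
    have hu1' : u ≤ 1 := by
      rw [hu, div_le_one hn]; simp
    simp only [zero_add, Finset.range_one, Finset.sum_singleton, Nat.sub_self, Nat.cast_zero, zero_mul, sub_zero, hS1, hA0, Nat.sub_zero]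
    have h1 : 1 - b0 ≤ (b0 + x/2 + u) * H 1 := by
      have h2 : (b0 + u) * 0.36 ≤ (b0 + x/2 + u) * H 1 := by
        gcongr
        · linarith
        · linarith
      refine le_trans ?_ h2
      have h3 : 0 ≤ b0 * (0.36 - 0.64 * u + 0.36 * u^2) := by
        apply mul_nonneg hb0p.le
        nlinarith [sq_nonneg (u - 0.9)]
      have e : b0 * (0.36 - 0.64 * u + 0.36 * u^2) = (b0 + u) * 0.36 - (1 - b0) := by
        linear_combination (0.36 * u - 1) * hbu
      linarith
    have := mul_le_mul_of_nonneg_left h1 hx0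
    linarith
  · set M := m + 2 with hM
    have htail := sg_tail x hx0 S (fun i => A (M-1-i)) (fun i => ((M-1-i:ℕ):ℝ)*u) (fun i => hAn _) m (by
      intro i hi
      have h := hratio (i+1) (by omega)
      have e : M - (i+1) = M - 1 - i := by omega
      rw [e] at h
      push_cast at h
      have h2 := mul_nonneg (hSn (i+2)) (by positivity : (0:ℝ) ≤ (i:ℝ)+1)
      have e3 : i + 1 + 1 = i + 2 := rfl
      rw [e3] at h
      linarith)
    refine htail.trans ?_
    have hz : (M - 1 - (m+1)) = 0 := by omega
    simp only [hz, Nat.cast_zero, zero_mul, sub_zero]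
    refine mul_le_mul_of_nonneg_left ?_ hx0
    have r1 := hratio 1 (by omega)
    rw [show M - 1 = m + 1 by omega] at r1 ⊢
    rw [show m + 1 - 1 = m by omega, Nat.sub_zero]
    -- A bounds
    have hA1 : y * A (m+1) ≤ A m := by
      have h := sgG_upper y hy hy1 n m
      have h2 := mul_le_mul_of_nonneg_right h (by positivity : 0 ≤ u^(m+1))
      have h3 : (n:ℝ) * sgG y n m * u^(m+1) ≤ sgG y n m * u^m := by
        have := mul_nonneg (sgG_nonneg y hy n m) (by positivity : 0 ≤ u^(m+1))
        have e : sgG y n m * u^m = (n+1) * (sgG y n m * u^(m+1)) := by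
          linear_combination -(sgG y n m * u^m) * hu1
        rw [e]; linarith
      simp only [hA]; linarith
    have hA2 : y * (1 - u) * A (m+1) ≤ A (m+2) := by
      have h := sgG_lower y hy hy1 n (m+1)
      have h2 := mul_le_mul_of_nonneg_right h (by positivity : 0 ≤ u^(m+2))
      simp only [hA]
      have e : y * (1 - u) * (sgG y n (m+1) * u^(m+1)) = y * n * sgG y n (m+1) * u^(m+2) := by
        linear_combination -(y * sgG y n (m+1) * u^(m+1)) * hu1
      rw [e]; exact h2
    have hH4 : A (m+2) + (M * u) * y * A (m+1) + (M*u) * (M*u - u) / 2 * A m ≤ H M := by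
      have hsub : Finset.range 3 ⊆ Finset.range (M+1) := by
        intro k; simp; omega
      have h := Finset.sum_le_sum_of_subset_of_nonneg (f := fun k => (M.choose k : ℝ) * u^k * sgw y k * A (M-k)) hsub
        (fun k _ _ => mul_nonneg (mul_nonneg (by positivity) (sgw_pos y hy k).le) (hAn _))
      rw [← hH3] at h
      refine le_trans (le_of_eq ?_) h
      simp only [Finset.sum_range_succ, Finset.sum_range_zero]
      rw [show M - 0 = m + 2 by omega, show M - 1 = m + 1 by omega, show M - 2 = m by omega]
      rw [Nat.cast_choose_two]
      simp [sgw]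
      left
      ring
    have hMu : (M:ℝ) * u - u = ((m+1:ℕ):ℝ) * u := by rw [hM]; push_cast; ring
    set l : ℝ := (M:ℝ) * u with hl
    have hl0 : 0 ≤ l := by positivity
    have hlu : 0 ≤ l - u := by rw [hMu]; positivity
    rw [← hMu] at r1 ⊢
    set a := A (m+1) with ha
    have ha0 : 0 ≤ a := hAn _
    have hH5 : y * (1 - u + l + l*(l-u)/2) * a ≤ H M := by
      have := mul_le_mul_of_nonneg_left hA1 (by positivity : 0 ≤ l*(l-u)/2)
      linarith
    have r2 : S 2 ≤ (l-u)/2 * S 1 := by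
      norm_num at r1
      linarith
    have hlhs : S 1 * a - ((l-u) * S 1 - S 2) * A m ≤ S 1 * (1 - y*(l-u)/2) * a := by
      have h1 := mul_le_mul_of_nonneg_right r2 (hAn m)
      have h2 := mul_le_mul_of_nonneg_left hA1 (mul_nonneg (hSn 1) (by positivity : 0 ≤ (l-u)/2))
      linarith
    refine hlhs.trans ?_
    have hbx : 0 ≤ b0 + x/2 + u := by positivity
    refine le_trans ?_ (mul_le_mul_of_nonneg_left hH5 hbx)
    rcases Nat.eq_zero_or_pos n with h0 | h0
    · have : a = 0 := by simp [ha, hA, h0, sgG]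
      simp [this]
    · have hu2 : u ≤ 1/2 := by
        have : (1:ℝ) ≤ n := by exact_mod_cast h0
        rw [hu]
        apply one_div_le_one_div_of_le <;> linarith
      have hP := sg_num3 l u y b0 hl0 hu0.le hu2 hy0 hy1 hb0e
      unfold sgP at hP
      have h3 := mul_nonneg hP ha0
      rw [hS1]
      rw [hx]
      linarith

lemma sg_exp (t : ℝ) (h0 : 0 ≤ t) (h1 : t ≤ 1) : (1 - t) * (1 + t^2/2) ≤ Real.exp (-t) := by
  have h := Real.exp_bound' h0 h1 (n := 3) (by norm_num)
  simp only [Finset.sum_range_succ, Finset.sum_range_zero, Nat.factorial] at h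
  norm_num at h
  have h' : Real.exp t ≤ 1 + t + t^2/2 + t^3*(2/9) := by linarith
  rw [Real.exp_neg, ← one_div, le_div_iff₀ (Real.exp_pos _)]
  have h2 : 0 ≤ (1 - t) * (1 + t^2/2) := mul_nonneg (by linarith) (by positivity)
  refine (mul_le_mul_of_nonneg_left h' h2).trans ?_
  have : 0 ≤ t^3 * (5/18) + t^4 * (17/36) + t^5 * (5/36) + t^6 * (1/9) := by positivity
  linarith

lemma sg_mgf (n M : ℕ) (t : ℝ) (h0 : 0 ≤ t) (h1 : t ≤ 1) :
    sgG (Real.exp (-t)) (n+2) (M+1) / ((n:ℝ)+2)^(M+1) ≤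
      Real.exp (-(((M:ℝ)+1) / Real.exp (((M:ℝ)+1)/((n:ℝ)+1)) * (t - t^2/2))) := by
  set μ : ℝ := ((M:ℝ)+1) / Real.exp (((M:ℝ)+1)/((n:ℝ)+1)) with hμ
  set m : ℝ → ℝ := fun t => sgG (Real.exp (-t)) (n+2) (M+1) / ((n:ℝ)+2)^(M+1) with hm
  set m' : ℝ → ℝ := fun t => ((M+1:ℕ) * (n+2:ℕ) * sgG (Real.exp (-t)) (n+1) M * (Real.exp (-t) * (-1))) / ((n:ℝ)+2)^(M+1) with hm'
  have hd : ∀ t, HasDerivAt m (m' t) t := by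
    intro t
    have h2 : HasDerivAt (fun t : ℝ => Real.exp (-t)) (Real.exp (-t) * (-1)) t := (hasDerivAt_neg t).exp
    exact ((sgG_deriv (n+2) (M+1) (Real.exp (-t))).comp t h2).div_const _
  set E : ℝ → ℝ := fun t => Real.exp (μ * (t - t^2/2)) with hE
  have hdE : ∀ t, HasDerivAt E (E t * (μ * (1 - t))) t := by
    intro t
    have h2 : HasDerivAt (fun t : ℝ => μ * (t - t^2/2)) (μ * (1 - t)) t := by
      refine (((hasDerivAt_id' t).fun_sub ((hasDerivAt_pow 2 t).div_const 2)).const_mul μ).congr_deriv ?_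
      push_cast
      ring
    exact h2.exp
  have hineq : ∀ t, 0 ≤ t → t ≤ 1 → m' t + μ * (1 - t) * m t ≤ 0 := by
    intro t h0 h1
    set y := Real.exp (-t) with hy
    have hyp : 0 < y := Real.exp_pos _
    have hy1 : y ≤ 1 := by rw [hy]; exact Real.exp_le_one_iff.2 (by linarith)
    have hy0 : 0.36 ≤ y := by
      have : Real.exp (-1) ≤ y := Real.exp_le_exp.2 (by linarith)
      refine le_trans ?_ this
      rw [Real.exp_neg, le_inv_comm₀ (by norm_num) (Real.exp_pos 1)]
      have := Real.exp_one_lt_d9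
      norm_num at this ⊢
      linarith
    have hyt : 1 - y ≤ t := by have := Real.add_one_le_exp (-t); linarith
    have hk := sg_key y hy0 hy1 n M
    set h := sgG y (n+1) M / ((n:ℝ)+1)^M with hh
    have hhn : 0 ≤ h := div_nonneg (sgG_nonneg y hyp _ _) (by positivity)
    set u : ℝ := 1/((n:ℝ)+1) with hu
    have hu0 : 0 < u := by positivity
    set b0 : ℝ := (((n:ℝ)+1)/((n:ℝ)+2))^M with hb0
    have e1 : m' t = -(y * ((M:ℝ)+1) * b0 * h) := by
      simp only [hm', hb0, hh, ← hy]
      rw [div_pow]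
      push_cast
      field_simp
      ring
    have hb : 1 + u ≤ Real.exp (((M:ℝ)+1)/((n:ℝ)+1)) * b0 := by
      have e : ((M:ℝ)+1)/((n:ℝ)+1) = u + M * u := by rw [hu]; field_simp; ring
      rw [e, Real.exp_add, Real.exp_nat_mul]
      have h2 := Real.add_one_le_exp u
      have h3 : (1 + u)^M * b0 = 1 := by
        rw [hb0, ← mul_pow]
        have : (1 + u) * (((n:ℝ)+1)/((n:ℝ)+2)) = 1 := by rw [hu]; field_simp; ring
        rw [this, one_pow]
      have h4 : 1 ≤ Real.exp u ^ M * b0 := by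
        rw [← h3]
        gcongr
        linarith
      have := mul_le_mul h2 h4 (by norm_num) (Real.exp_pos u).le
      linarith
    have hμb : μ * (1 + u) ≤ ((M:ℝ)+1) * b0 := by
      rw [hμ, div_mul_eq_mul_div, div_le_iff₀ (Real.exp_pos _)]
      have := mul_le_mul_of_nonneg_left hb (by positivity : 0 ≤ (M:ℝ)+1)
      linarith
    have hμ0 : 0 ≤ μ := by positivity
    have hρ : (1 - t) * (1 + (1-y)^2/2 + (1-y)*u) ≤ y * (1 + u) := by
      have h2 := sg_exp t h0 h1
      have h3 : 1 + (1-y)^2/2 + (1-y)*u ≤ (1 + t^2/2) * (1 + u) := by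
        have : (1-y)^2 ≤ t^2 := by
          apply pow_le_pow_left₀ <;> linarith
        have h5 : (1-y)*u ≤ 1 * u := by gcongr; linarith
        have : 0 ≤ t^2/2 * u := by positivity
        linarith
      have h4 := mul_le_mul_of_nonneg_left h3 (by linarith : 0 ≤ 1 - t)
      have h5 := mul_le_mul_of_nonneg_right h2 (by linarith : 0 ≤ 1 + u)
      linarith
    rw [e1]
    have s1 := mul_le_mul_of_nonneg_left hk (mul_nonneg hμ0 (by linarith : 0 ≤ 1 - t))
    have s2 := mul_le_mul_of_nonneg_right (mul_le_mul_of_nonneg_left hρ hμ0) hhn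
    have s3 := mul_le_mul_of_nonneg_right hμb (mul_nonneg hyp.le hhn)
    have e2 : m t = sgG y (n+2) (M+1) / ((n:ℝ)+2)^(M+1) := rfl
    rw [e2]
    linarith
  have hanti : AntitoneOn (fun t => m t * E t) (Set.Icc 0 1) := by
    apply antitoneOn_of_deriv_nonpos (convex_Icc 0 1)
    · exact fun t _ => ((hd t).mul (hdE t)).continuousAt.continuousWithinAt
    · exact fun t _ => ((hd t).mul (hdE t)).differentiableAt.differentiableWithinAt
    · intro t ht
      rw [interior_Icc] at ht
      have e : deriv (fun t => m t * E t) t = _ := ((hd t).mul (hdE t)).deriv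
      rw [e]
      have := mul_nonneg_of_nonpos_of_nonpos (hineq t ht.1.le ht.2.le) (neg_nonpos.2 (Real.exp_pos (μ * (t - t^2/2))).le)
      have e3 : E t = Real.exp (μ * (t - t^2/2)) := rfl
      rw [← e3] at this
      linarith
  have hfin := hanti (Set.left_mem_Icc.2 zero_le_one) (Set.mem_Icc.2 ⟨h0, h1⟩) h0
  have hm0 : m 0 = 1 := by
    have hw : ∀ k, sgw 1 k = 1 := by intro k; simp [sgw]
    have := sgG_comb 1 (n+2) (Fin (M+1))
    simp only [hw] at this
    simp at this
    simp only [hm, neg_zero, Real.exp_zero]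
    rw [← this]
    field_simp
  have hE0 : E 0 = 1 := by simp [hE]
  simp only [hm0, hE0, mul_one] at hfin
  have e : Real.exp (-(μ * (t - t^2/2))) = 1 / E t := by rw [Real.exp_neg, one_div]
  rw [e, le_div_iff₀ (Real.exp_pos _)]
  exact hfin

/-- Drop `N` balls uniformly at random into `B` bins where `B ≥ N + √N` or
`B ≤ N - √N` (with `N ≥ 1`, `B ≥ 2`).  For any `0 < ε < 1`, with probability at
least `1 - exp(-ε²·N/(2·e^{N/(B-1)}))` the number of singleton bins is at least
`(1-ε)·N / e^{N/(B-1)}`. -/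
theorem singletons_lower_concentration (N B : ℕ) (hN : 1 ≤ N) (hB : 2 ≤ B)
    (hyp : (B : ℝ) ≥ N + Real.sqrt N ∨ (B : ℝ) ≤ N - Real.sqrt N)
    (ε : ℝ) (hε0 : 0 < ε) (hε1 : ε < 1) :
    ((Finset.univ.filter (fun f : Fin N → Fin B =>
        (1 - ε) * N / Real.exp ((N : ℝ) / ((B : ℝ) - 1)) ≤
          ((Finset.univ.filter (fun j : Fin B =>
            (Finset.univ.filter (fun i : Fin N => f i = j)).card = 1)).card : ℝ))).card : ℝ)
        / B ^ N ≥
      1 - Real.exp (-(ε ^ 2 * N) / (2 * Real.exp ((N : ℝ) / ((B : ℝ) - 1)))) := by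
  obtain ⟨M, rfl⟩ : ∃ M, N = M + 1 := ⟨N - 1, by omega⟩
  obtain ⟨n, rfl⟩ : ∃ n, B = n + 2 := ⟨B - 2, by omega⟩
  have hmgf := sg_mgf n M ε hε0.le hε1.le
  have hcomb : ∑ f : Fin (M+1) → Fin (n+2), ∏ j : Fin (n+2),
      sgw (Real.exp (-ε)) (Finset.univ.filter (fun i => f i = j)).card
        = sgG (Real.exp (-ε)) (n+2) (Fintype.card (Fin (M+1))) := by
    convert sgG_comb (Real.exp (-ε)) (n+2) (Fin (M+1))
  rw [Fintype.card_fin] at hcomb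
  have eB : ((n+2:ℕ):ℝ) - 1 = (n:ℝ)+1 := by push_cast; ring
  have eN : ((M+1:ℕ):ℝ) = (M:ℝ)+1 := by push_cast; ring
  have eB' : ((n+2:ℕ):ℝ) = (n:ℝ)+2 := by push_cast; ring
  rw [eB, eN, eB']
  set D : ℝ := Real.exp (((M:ℝ)+1)/((n:ℝ)+1)) with hD
  have hDp : 0 < D := Real.exp_pos _
  set I : (Fin (M+1) → Fin (n+2)) → ℕ := fun f => (Finset.univ.filter (fun j : Fin (n+2) =>
            (Finset.univ.filter (fun i : Fin (M+1) => f i = j)).card = 1)).card with hI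
  have hprod : ∀ f : Fin (M+1) → Fin (n+2),
      ∏ j : Fin (n+2), sgw (Real.exp (-ε)) (Finset.univ.filter (fun i => f i = j)).card
        = Real.exp (-ε) ^ (I f) := by
    intro f
    simp only [sgw, hI]
    rw [Finset.prod_ite, Finset.prod_const, Finset.prod_const_one, mul_one]
  rw [Finset.sum_congr rfl (fun f _ => hprod f)] at hcomb
  set c : ℝ := (1 - ε) * ((M:ℝ)+1) / D with hc
  have hsplit := Finset.card_filter_add_card_filter_not (s := (Finset.univ : Finset (Fin (M+1) → Fin (n+2))))
    (fun f => c ≤ (I f : ℝ))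
  have hcardall : (Finset.univ : Finset (Fin (M+1) → Fin (n+2))).card = (n+2)^(M+1) := by simp
  rw [hcardall] at hsplit
  have hsplit' : ((Finset.univ.filter (fun f => c ≤ (I f : ℝ))).card : ℝ) +
    ((Finset.univ.filter (fun f => ¬ c ≤ (I f : ℝ))).card : ℝ) = ((n:ℝ)+2)^(M+1) := by
    exact_mod_cast hsplit
  have hmarkov : ((Finset.univ.filter (fun f => ¬ c ≤ (I f : ℝ))).card : ℝ) ≤
      Real.exp (ε * c) * sgG (Real.exp (-ε)) (n+2) (M+1) := by
    rw [← hcomb, Finset.mul_sum]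
    have h1 : ((Finset.univ.filter (fun f => ¬ c ≤ (I f : ℝ))).card : ℝ) =
      ∑ f ∈ Finset.univ.filter (fun f => ¬ c ≤ (I f : ℝ)), (1:ℝ) := by simp
    rw [h1]
    refine le_trans (Finset.sum_le_sum (g := fun f => Real.exp (ε * c) * Real.exp (-ε) ^ (I f)) ?_)
      (Finset.sum_le_sum_of_subset_of_nonneg (Finset.subset_univ _) (fun f _ _ => by positivity))
    intro f hf
    simp only [Finset.mem_filter, Finset.mem_univ, true_and, not_le] at hf
    rw [← Real.exp_nat_mul, ← Real.exp_add]
    apply Real.one_le_exp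
    have := mul_le_mul_of_nonneg_left hf.le hε0.le
    linarith
  have hP : (0:ℝ) < ((n:ℝ)+2)^(M+1) := by positivity
  rw [ge_iff_le, le_div_iff₀ hP]
  rw [div_le_iff₀ hP] at hmgf
  have h2 := mul_le_mul_of_nonneg_left hmgf (Real.exp_pos (ε * c)).le
  rw [← mul_assoc, ← Real.exp_add] at h2
  have e : ε * c + -(((M:ℝ)+1) / D * (ε - ε^2/2)) = -(ε^2 * ((M:ℝ)+1)) / (2 * D) := by
    rw [hc]; field_simp; ring
  rw [e] at h2
  have : ((Finset.univ.filter (fun f => c ≤ (I f : ℝ))).card : ℝ) ≥ (1 - Real.exp (-(ε^2 * ((M:ℝ)+1)) / (2 * D))) * ((n:ℝ)+2)^(M+1) := by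
    linarith
  convert this
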